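/- arXiv:2309.05816 — 3 statements merged into one kernel-verified Lean document; each statement's English description precedes it below -/
import Mathlib

section
/- Let d be a right-continuous distortion function and u : ℝ → ℝ an increasing left-continuous function. Then for every F ∈ M and x ∈ ℝ one has T_d(F)(x) = d(F(x)), and moreover T_d ∘ T^u(F)(x) = d(F(u_R^{-1}(x))) = T^u ∘ T_d(F)(x), where u_R^{-1}(x) = sup{y ∈ ℝ : u(y) ≤ x}; in particular T_d and T^u commute on M. -/
/-!
On `M` the right limit in `T_d` is superfluous: a right-continuous `d` composed with a cdf is again
right-continuous, so `T_d F = d ∘ F ∈ M` (`comp_mem_mSet`, `distortT_eq`).  On the other side,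
left-continuity of `u` makes the down-set `{y | u y ≤ x}` closed, hence it is `∅`, `ℝ` or
`(-∞, u_R⁻¹(x)]`, and so `T^u F x = F (u_R⁻¹ x)` (`utilityT_eq`).  Both compositions therefore equal
`d (F (u_R⁻¹ x))`; the infinite values of `u_R⁻¹` are handled by `d 0 = 0` and `d 1 = 1`.
-/

open MeasureTheory Filter Topology Set

noncomputable section

/-- The set of cdfs of compactly supported probability distributions on ℝ:
increasing, right-continuous, equal to `0` for all sufficiently small `x` and
equal to `1` for all sufficiently large `x`. -/
def mSet : Set (ℝ → ℝ) :=
  {F | Monotone F ∧ (∀ x, ContinuousWithinAt F (Set.Ici x) x) ∧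
    (∃ a, ∀ x ≤ a, F x = 0) ∧ (∃ b, ∀ x, b ≤ x → F x = 1)}

/-- The set of cdfs of all probability distributions on ℝ: increasing,
right-continuous, with limit `0` at `-∞` and limit `1` at `+∞`. -/
def m0Set : Set (ℝ → ℝ) :=
  {F | Monotone F ∧ (∀ x, ContinuousWithinAt F (Set.Ici x) x) ∧
    Tendsto F atBot (𝓝 0) ∧ Tendsto F atTop (𝓝 1)}

/-- A utility function: increasing (non-strict) and continuous. -/
def IsUF (u : ℝ → ℝ) : Prop := Monotone u ∧ Continuous u

/-- An increasing and left-continuous function on ℝ. -/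
def IsLeftCtsIncr (u : ℝ → ℝ) : Prop :=
  Monotone u ∧ ∀ x, ContinuousWithinAt u (Set.Iic x) x

/-- A distortion function: an increasing function `d : [0,1] → [0,1]` with
`d 0 = 0` and `d 1 = 1` (values outside `[0,1]` are irrelevant). -/
def IsDF (d : ℝ → ℝ) : Prop :=
  MonotoneOn d (Set.Icc 0 1) ∧ d 0 = 0 ∧ d 1 = 1

/-- Right-continuity of a distortion function on `[0,1)`. -/
def DFRightCts (d : ℝ → ℝ) : Prop :=
  ∀ x ∈ Set.Ico (0:ℝ) 1, ContinuousWithinAt d (Set.Ioi x) x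

/-- A distortion function with moreover `d(0+) = 0` and `d(1-) = 1`. -/
def IsDFhat (d : ℝ → ℝ) : Prop :=
  IsDF d ∧ Tendsto d (𝓝[>] (0:ℝ)) (𝓝 0) ∧ Tendsto d (𝓝[<] (1:ℝ)) (𝓝 1)

/-- The probability distortion generated by `d`:  `T_d F x = (d ∘ F)(x+)`,
the right limit of `d ∘ F` at `x`. -/
noncomputable def distortT (d F : ℝ → ℝ) : ℝ → ℝ :=
  fun x => Function.rightLim (d ∘ F) x

/-- The utility transform `T^u`: it maps a cdf `F` to the cdf of the
pushforward under `u` of the probability measure with cdf `F`. -/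
noncomputable def utilityT (u F : ℝ → ℝ) : ℝ → ℝ := by
  classical
  exact
    if h : Monotone F ∧ ∀ x, ContinuousWithinAt F (Set.Ici x) x then
      fun x => ((StieltjesFunction.measure ⟨F, h.1, h.2⟩).map u (Set.Iic x)).toReal
    else F

/-- Left quantile `F_L^{-1}(p) = inf {x | F x ≥ p}`. -/
noncomputable def leftQ (F : ℝ → ℝ) (p : ℝ) : ℝ := sInf {x | p ≤ F x}

/-- Right quantile `F_R^{-1}(p) = inf {x | F x > p}`. -/
noncomputable def rightQ (F : ℝ → ℝ) (p : ℝ) : ℝ := sInf {x | p < F x}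

/-- `u_R^{-1}(x) = sup {y | u y ≤ x}` as an extended real (so `sup ∅ = ⊥`). -/
noncomputable def uRinvE (u : ℝ → ℝ) (x : ℝ) : EReal :=
  sSup {c : EReal | ∃ y : ℝ, c = (y : EReal) ∧ u y ≤ x}

/-- Evaluation of a cdf at an extended real, with `F(−∞) = 0`, `F(+∞) = 1`. -/
noncomputable def evalExt (F : ℝ → ℝ) (c : EReal) : ℝ :=
  if c = ⊥ then 0 else if c = ⊤ then 1 else F c.toReal

lemma mem_Icc_of_mem_mSet {F : ℝ → ℝ} (hF : F ∈ mSet) (x : ℝ) : F x ∈ Icc (0:ℝ) 1 := by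
  obtain ⟨hm, -, ⟨a, ha⟩, ⟨b, hb⟩⟩ := hF
  constructor
  · rw [← ha (min a x) (min_le_left _ _)]; exact hm (min_le_right _ _)
  · rw [← hb (max b x) (le_max_left _ _)]; exact hm (le_max_right _ _)

lemma comp_mem_mSet {d F : ℝ → ℝ} (hd : IsDF d) (hdr : DFRightCts d) (hF : F ∈ mSet) :
    d ∘ F ∈ mSet := by
  have hI := mem_Icc_of_mem_mSet hF
  obtain ⟨hm, hc, ⟨a, ha⟩, ⟨b, hb⟩⟩ := hF
  refine ⟨fun x y h => hd.1 (hI x) (hI y) (hm h), fun x => ?_,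
    ⟨a, fun x hx => by simp [ha x hx, hd.2.1]⟩, ⟨b, fun x hx => by simp [hb x hx, hd.2.2]⟩⟩
  rcases (hI x).2.lt_or_eq with h1 | h1
  · have hr : ContinuousWithinAt d (Ici (F x)) (F x) :=
      continuousWithinAt_Ioi_iff_Ici.1 (hdr (F x) ⟨(hI x).1, h1⟩)
    exact hr.comp (hc x) fun y hy => hm hy
  · -- `d` is not assumed right-continuous at `1`, but `F` is constant to the right of `x`.
    refine (continuousWithinAt_const (b := d 1)).congr (fun y hy => ?_) (by simp [h1])
    have : F y = 1 := le_antisymm (hI y).2 (h1 ▸ hm hy)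
    simp [this]

lemma distortT_eq {d F : ℝ → ℝ} (hd : IsDF d) (hdr : DFRightCts d) (hF : F ∈ mSet) :
    distortT d F = d ∘ F := by
  funext x
  have h := comp_mem_mSet hd hdr hF
  exact (h.2.1 x).rightLim_eq

/-- The Stieltjes function underlying a cdf in `M`. -/
def stieltjesOf {F : ℝ → ℝ} (hF : F ∈ mSet) : StieltjesFunction ℝ := ⟨F, hF.1, hF.2.1⟩

lemma stieltjesOf_tendsto_atBot {F : ℝ → ℝ} (hF : F ∈ mSet) :
    Tendsto (stieltjesOf hF) atBot (𝓝 0) := by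
  obtain ⟨a, ha⟩ := hF.2.2.1
  refine tendsto_const_nhds.congr' ?_
  filter_upwards [eventually_le_atBot a] with x hx using (ha x hx).symm

lemma stieltjesOf_tendsto_atTop {F : ℝ → ℝ} (hF : F ∈ mSet) :
    Tendsto (stieltjesOf hF) atTop (𝓝 1) := by
  obtain ⟨b, hb⟩ := hF.2.2.2
  refine tendsto_const_nhds.congr' ?_
  filter_upwards [eventually_ge_atTop b] with x hx using (hb x hx).symm

lemma isProbabilityMeasure_stieltjesOf {F : ℝ → ℝ} (hF : F ∈ mSet) :
    IsProbabilityMeasure (stieltjesOf hF).measure :=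
  (stieltjesOf hF).isProbabilityMeasure (stieltjesOf_tendsto_atBot hF)
    (stieltjesOf_tendsto_atTop hF)

lemma stieltjesOf_measure_Iic {F : ℝ → ℝ} (hF : F ∈ mSet) (c : ℝ) :
    ((stieltjesOf hF).measure (Iic c)).toReal = F c := by
  rw [(stieltjesOf hF).measure_Iic (stieltjesOf_tendsto_atBot hF), sub_zero]
  exact ENNReal.toReal_ofReal (mem_Icc_of_mem_mSet hF c).1

lemma utilityT_eq_map {u F : ℝ → ℝ} (hF : F ∈ mSet) (x : ℝ) :
    utilityT u F x = ((stieltjesOf hF).measure.map u (Iic x)).toReal := by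
  unfold utilityT
  rw [dif_pos ⟨hF.1, hF.2.1⟩]
  rfl

lemma utilityT_eq_preimage {u F : ℝ → ℝ} (hu : Monotone u) (hF : F ∈ mSet) (x : ℝ) :
    utilityT u F x = ((stieltjesOf hF).measure (u ⁻¹' Iic x)).toReal := by
  rw [utilityT_eq_map hF, Measure.map_apply hu.measurable measurableSet_Iic]

lemma utilityT_mem_mSet {u F : ℝ → ℝ} (hu : Monotone u) (hF : F ∈ mSet) :
    utilityT u F ∈ mSet := by
  have := isProbabilityMeasure_stieltjesOf hF
  have : IsProbabilityMeasure ((stieltjesOf hF).measure.map u) :=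
    Measure.isProbabilityMeasure_map hu.measurable.aemeasurable
  have hcdf : utilityT u F = ProbabilityTheory.cdf ((stieltjesOf hF).measure.map u) := by
    funext x
    rw [utilityT_eq_map hF, ProbabilityTheory.cdf_eq_real]
    rfl
  obtain ⟨a, ha⟩ := hF.2.2.1
  obtain ⟨b, hb⟩ := hF.2.2.2
  refine ⟨hcdf ▸ ProbabilityTheory.monotone_cdf _,
    fun x => hcdf ▸ StieltjesFunction.right_continuous _ x,
    ⟨u a - 1, fun x hx => ?_⟩, ⟨u b, fun x hx => ?_⟩⟩
  · refine le_antisymm ?_ (by rw [hcdf]; exact ProbabilityTheory.cdf_nonneg _ _)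
    rw [utilityT_eq_preimage hu hF, ← ha a le_rfl, ← stieltjesOf_measure_Iic hF a]
    refine ENNReal.toReal_mono (measure_ne_top _ _) (measure_mono fun y hy => ?_)
    by_contra hya
    have h1 : u a ≤ u y := hu (not_le.1 hya).le
    have h2 : u y ≤ x := hy
    linarith
  · refine le_antisymm (by rw [hcdf]; exact ProbabilityTheory.cdf_le_one _ _) ?_
    rw [utilityT_eq_preimage hu hF, ← hb b le_rfl, ← stieltjesOf_measure_Iic hF b]
    exact ENNReal.toReal_mono (measure_ne_top _ _)
      (measure_mono fun y hy => (hu hy).trans hx)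

/-- For left-continuous increasing `u`, the sublevel set `{y | u y ≤ x}` is `∅`, `ℝ` or a closed
half-line, with right endpoint `u_R⁻¹(x)` in the extended reals. -/
lemma uRinvE_cases {u : ℝ → ℝ} (hu : IsLeftCtsIncr u) (x : ℝ) :
    (u ⁻¹' Iic x = ∅ ∧ uRinvE u x = ⊥) ∨ (u ⁻¹' Iic x = univ ∧ uRinvE u x = ⊤) ∨
      ∃ c : ℝ, u ⁻¹' Iic x = Iic c ∧ uRinvE u x = c := by
  rcases (u ⁻¹' Iic x).eq_empty_or_nonempty with he | hne
  · refine .inl ⟨he, ?_⟩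
    refine sSup_eq_bot.2 ?_
    rintro _ ⟨y, -, hy⟩
    exact absurd (show y ∈ u ⁻¹' Iic x from hy) (he ▸ notMem_empty y)
  by_cases hb : BddAbove (u ⁻¹' Iic x)
  · refine .inr (.inr ⟨sSup (u ⁻¹' Iic x), ?_, ?_⟩)
    all_goals
      have hlub := isLUB_csSup hne hb
      set c := sSup (u ⁻¹' Iic x)
      have hc : u c ≤ x := by
        have hcl : c ∈ closure (u ⁻¹' Iic x) := hlub.mem_closure hne
        -- Left-continuity of `u` at `c`: the supremum is attained.
        have hmem : u c ∈ closure (Iic x) :=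
          ((hu.2 c).mono fun y hy => hlub.1 hy).mem_closure hcl fun y hy => hy
        rwa [isClosed_Iic.closure_eq] at hmem
    · ext y
      exact ⟨fun hy => hlub.1 hy, fun hy => (hu.1 hy).trans hc⟩
    · refine IsLUB.sSup_eq (IsGreatest.isLUB ⟨⟨c, rfl, hc⟩, ?_⟩)
      rintro _ ⟨y, rfl, hy⟩
      exact EReal.coe_le_coe_iff.2 (hlub.1 hy)
  · rw [not_bddAbove_iff] at hb
    have hall : ∀ y, u y ≤ x := fun y => by
      obtain ⟨z, hz, hyz⟩ := hb y
      exact (hu.1 hyz.le).trans hz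
    refine .inr (.inl ⟨eq_univ_of_forall hall, ?_⟩)
    refine EReal.eq_top_iff_forall_lt _ |>.2 fun y => ?_
    exact lt_of_lt_of_le (EReal.coe_lt_coe_iff.2 (lt_add_one y))
      (le_sSup ⟨y + 1, rfl, hall _⟩)

lemma utilityT_eq {u F : ℝ → ℝ} (hu : IsLeftCtsIncr u) (hF : F ∈ mSet) (x : ℝ) :
    utilityT u F x = evalExt F (uRinvE u x) := by
  have := isProbabilityMeasure_stieltjesOf hF
  rw [utilityT_eq_preimage hu.1 hF]
  rcases uRinvE_cases hu x with ⟨h1, h2⟩ | ⟨h1, h2⟩ | ⟨c, h1, h2⟩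
  · simp [h1, h2, evalExt]
  · simp [h1, h2, evalExt]
  · rw [h1, h2, stieltjesOf_measure_Iic hF]
    simp [evalExt]

lemma evalExt_comp {d : ℝ → ℝ} (hd : IsDF d) (F : ℝ → ℝ) (c : EReal) :
    evalExt (d ∘ F) c = d (evalExt F c) := by
  unfold evalExt
  split_ifs <;> simp [hd.2.1, hd.2.2]

/-- For a right-continuous distortion function `d` and an increasing
left-continuous `u : ℝ → ℝ`: `T_d F x = d (F x)` on `M`, and moreover
`T_d (T^u F) x = d (F (u_R^{-1} x)) = T^u (T_d F) x`; in particular `T_d` and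
`T^u` commute on `M`. -/
theorem stmt16 (d u : ℝ → ℝ) (hd : IsDF d) (hdr : DFRightCts d)
    (hu : IsLeftCtsIncr u) :
    (∀ F ∈ mSet, ∀ x, distortT d F x = d (F x)) ∧
    (∀ F ∈ mSet, ∀ x,
      distortT d (utilityT u F) x = d (evalExt F (uRinvE u x)) ∧
      d (evalExt F (uRinvE u x)) = utilityT u (distortT d F) x) ∧
    (∀ F ∈ mSet, distortT d (utilityT u F) = utilityT u (distortT d F)) := by
  have hL : ∀ F ∈ mSet, ∀ x, distortT d (utilityT u F) x = d (evalExt F (uRinvE u x)) := by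
    intro F hF x
    rw [distortT_eq hd hdr (utilityT_mem_mSet hu.1 hF), Function.comp_apply, utilityT_eq hu hF]
  have hR : ∀ F ∈ mSet, ∀ x, d (evalExt F (uRinvE u x)) = utilityT u (distortT d F) x := by
    intro F hF x
    rw [distortT_eq hd hdr hF, utilityT_eq hu (comp_mem_mSet hd hdr hF), evalExt_comp hd]
  exact ⟨fun F hF x => congrFun (distortT_eq hd hdr hF) x,
    fun F hF x => ⟨hL F hF x, hR F hF x⟩,
    fun F hF => funext fun x => (hL F hF x).trans (hR F hF x)⟩
end
end

section
/- Let F₀ be the standard Cauchy cdf, F₀(x) = 1/2 + (1/π)·arctan(x). Then for every probability distribution F on ℝ (with cdf F) there exists a right-continuous distortion function d with d(0+)=0 and d(1−)=1 such that T_d(F₀) = F; explicitly, d(x) = F((F₀)_R^{-1}(x)) for x ∈ (0,1), d(0)=0, d(1)=1 works, where (F₀)_R^{-1}(x) = inf{t ∈ ℝ : F₀(t) > x}. Consequently M₀ = {T_d(F₀) : d right-continuous, d ∈ F̂_D}. -/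
/-!
The Cauchy cdf `F0` is a strictly increasing continuous bijection from `ℝ` onto `(0,1)`, with inverse
`cauchyQ p = tan (π (p - 1/2))`, and this inverse is the right quantile (`rightQ_F0`). Hence
`dOf F = F ∘ cauchyQ` on `(0,1)`. It inherits monotonicity and right-continuity from `F`, and the
limits of `F` at `∓∞` become `d(0+) = 0` and `d(1-) = 1`. For a right-continuous `d` the right limit in
`distortT` is just `d (F0 x)` (`distortT_F0`), so `T_d F0 = F ∘ cauchyQ ∘ F0 = F` for `d = dOf F`.
Conversely, `d ∘ F0` is a cdf for each right-continuous `d` in the class (`comp_F0_mem`).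
-/

open MeasureTheory Filter Topology Set

noncomputable section

/-- The standard Cauchy cdf `F₀ x = 1/2 + (1/π) · arctan x`. -/
noncomputable def F0 : ℝ → ℝ := fun x => 1 / 2 + (1 / Real.pi) * Real.arctan x

/-- The explicit distortion function `d(x) = F((F₀)_R^{-1}(x))` for
`x ∈ (0,1)`, with `d 0 = 0` and `d 1 = 1`. -/
noncomputable def dOf (F : ℝ → ℝ) : ℝ → ℝ := fun x =>
  if x ≤ 0 then 0 else if 1 ≤ x then 1 else F (rightQ F0 x)

/-- Inverse of the Cauchy cdf `F0` on `(0,1)`; outside `(0,1)` the value carries no meaning. -/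
def cauchyQ (p : ℝ) : ℝ := Real.tan (Real.pi * (p - 1 / 2))

lemma F0_strictMono : StrictMono F0 := by
  intro a b h
  have := Real.arctan_strictMono h
  have hp := Real.pi_pos
  unfold F0
  gcongr

lemma F0_continuous : Continuous F0 := by
  unfold F0
  fun_prop

lemma F0_mem (x : ℝ) : F0 x ∈ Ioo (0 : ℝ) 1 := by
  have hp := Real.pi_pos
  have h1 := Real.neg_pi_div_two_lt_arctan x
  have h2 := Real.arctan_lt_pi_div_two x
  have e : F0 x = (Real.pi / 2 + Real.arctan x) / Real.pi := by
    unfold F0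
    field_simp
  rw [e]
  constructor
  · apply div_pos <;> linarith
  · rw [div_lt_one hp]
    linarith

lemma F0_cauchyQ {p : ℝ} (hp : p ∈ Ioo (0 : ℝ) 1) : F0 (cauchyQ p) = p := by
  have hpi := Real.pi_pos
  unfold F0 cauchyQ
  rw [Real.arctan_tan]
  · field_simp
    ring
  · nlinarith [hp.1]
  · nlinarith [hp.2]

lemma cauchyQ_F0 (x : ℝ) : cauchyQ (F0 x) = x :=
  F0_strictMono.injective (F0_cauchyQ (F0_mem x))

lemma rightQ_F0 {p : ℝ} (hp : p ∈ Ioo (0 : ℝ) 1) : rightQ F0 p = cauchyQ p := by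
  have : {x | p < F0 x} = Ioi (cauchyQ p) := by
    ext x
    change p < F0 x ↔ cauchyQ p < x
    rw [← F0_strictMono.lt_iff_lt (a := cauchyQ p), F0_cauchyQ hp]
  rw [rightQ, this, csInf_Ioi]

lemma cauchyQ_continuousAt {p : ℝ} (hp : p ∈ Ioo (0 : ℝ) 1) : ContinuousAt cauchyQ p := by
  have hpi := Real.pi_pos
  have hc : Real.cos (Real.pi * (p - 1 / 2)) ≠ 0 := by
    apply ne_of_gt
    apply Real.cos_pos_of_mem_Ioo
    constructor <;> nlinarith [hp.1, hp.2]
  exact ContinuousAt.comp (f := fun q : ℝ => Real.pi * (q - 1 / 2))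
    (Real.continuousAt_tan.2 hc) (by fun_prop)

lemma cauchyQ_le_iff {p : ℝ} (hp : p ∈ Ioo (0 : ℝ) 1) (b : ℝ) : cauchyQ p ≤ b ↔ p ≤ F0 b := by
  rw [← F0_strictMono.le_iff_le, F0_cauchyQ hp]

lemma le_cauchyQ_iff {p : ℝ} (hp : p ∈ Ioo (0 : ℝ) 1) (b : ℝ) : b ≤ cauchyQ p ↔ F0 b ≤ p := by
  rw [← F0_strictMono.le_iff_le, F0_cauchyQ hp]

lemma cauchyQ_tendsto_zero : Tendsto cauchyQ (𝓝[>] (0 : ℝ)) atBot := by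
  refine tendsto_atBot.2 fun b => ?_
  filter_upwards [Ioo_mem_nhdsGT (F0_mem b).1] with p hp
  exact (cauchyQ_le_iff ⟨hp.1, hp.2.trans (F0_mem b).2⟩ b).2 hp.2.le

lemma cauchyQ_tendsto_one : Tendsto cauchyQ (𝓝[<] (1 : ℝ)) atTop := by
  refine tendsto_atTop.2 fun b => ?_
  filter_upwards [Ioo_mem_nhdsLT (F0_mem b).2] with p hp
  exact (le_cauchyQ_iff ⟨(F0_mem b).1.trans hp.1, hp.2⟩ b).2 hp.1.le

lemma F0_tendsto_atBot : Tendsto F0 atBot (𝓝[>] (0 : ℝ)) := by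
  refine tendsto_nhdsWithin_iff.2 ⟨?_, Eventually.of_forall fun x => (F0_mem x).1⟩
  have h := ((tendsto_nhdsWithin_iff.1 Real.tendsto_arctan_atBot).1.const_mul
    (1 / Real.pi)).const_add (1 / 2)
  have e : (1 / 2 + 1 / Real.pi * -(Real.pi / 2) : ℝ) = 0 := by
    field_simp
    norm_num
  rwa [e] at h

lemma F0_tendsto_atTop : Tendsto F0 atTop (𝓝[<] (1 : ℝ)) := by
  refine tendsto_nhdsWithin_iff.2 ⟨?_, Eventually.of_forall fun x => (F0_mem x).2⟩
  have h := ((tendsto_nhdsWithin_iff.1 Real.tendsto_arctan_atTop).1.const_mul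
    (1 / Real.pi)).const_add (1 / 2)
  have e : (1 / 2 + 1 / Real.pi * (Real.pi / 2) : ℝ) = 1 := by
    field_simp
    norm_num
  rwa [e] at h

lemma F0_tendsto_nhdsGT (x : ℝ) : Tendsto F0 (𝓝[>] x) (𝓝[>] (F0 x)) :=
  F0_continuous.continuousWithinAt.tendsto_nhdsWithin fun _ hy => F0_strictMono hy

lemma comp_F0_tendsto {d : ℝ → ℝ} (hd : DFRightCts d) (x : ℝ) :
    Tendsto (d ∘ F0) (𝓝[>] x) (𝓝 (d (F0 x))) :=
  Tendsto.comp (hd (F0 x) ⟨(F0_mem x).1.le, (F0_mem x).2⟩) (F0_tendsto_nhdsGT x)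

lemma distortT_F0 {d : ℝ → ℝ} (hd : DFRightCts d) (x : ℝ) : distortT d F0 x = d (F0 x) :=
  rightLim_eq_of_tendsto (comp_F0_tendsto hd x)

lemma dOf_eq (F : ℝ → ℝ) {p : ℝ} (hp : p ∈ Ioo (0 : ℝ) 1) : dOf F p = F (cauchyQ p) := by
  rw [dOf, if_neg (not_le.2 hp.1), if_neg (not_le.2 hp.2), rightQ_F0 hp]

lemma dOf_zero (F : ℝ → ℝ) : dOf F 0 = 0 := by simp [dOf]

lemma dOf_one (F : ℝ → ℝ) : dOf F 1 = 1 := by simp [dOf]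

lemma dOf_tendsto_zero {F : ℝ → ℝ} (hF : F ∈ m0Set) :
    Tendsto (dOf F) (𝓝[>] (0 : ℝ)) (𝓝 0) := by
  refine (hF.2.2.1.comp cauchyQ_tendsto_zero).congr' ?_
  filter_upwards [Ioo_mem_nhdsGT (zero_lt_one (α := ℝ))] with p hp
  exact (dOf_eq F hp).symm

lemma dOf_tendsto_one {F : ℝ → ℝ} (hF : F ∈ m0Set) :
    Tendsto (dOf F) (𝓝[<] (1 : ℝ)) (𝓝 1) := by
  refine (hF.2.2.2.comp cauchyQ_tendsto_one).congr' ?_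
  filter_upwards [Ioo_mem_nhdsLT (zero_lt_one (α := ℝ))] with p hp
  exact (dOf_eq F hp).symm

lemma dOf_monotoneOn {F : ℝ → ℝ} (hF : F ∈ m0Set) : MonotoneOn (dOf F) (Icc 0 1) := by
  have h0 : ∀ x, 0 ≤ F x := hF.1.le_of_tendsto hF.2.2.1
  have h1 : ∀ x, F x ≤ 1 := hF.1.ge_of_tendsto hF.2.2.2
  have hmem : ∀ p, dOf F p ∈ Icc (0 : ℝ) 1 := by
    intro p
    unfold dOf
    split_ifs
    · simp
    · simp
    · exact ⟨h0 _, h1 _⟩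
  intro p hp q hq hpq
  rcases hp.1.eq_or_lt with rfl | hp0
  · rw [dOf_zero]
    exact (hmem q).1
  rcases hq.2.eq_or_lt with rfl | hq1
  · rw [dOf_one]
    exact (hmem p).2
  have hp' : p ∈ Ioo (0 : ℝ) 1 := ⟨hp0, hpq.trans_lt hq1⟩
  have hq' : q ∈ Ioo (0 : ℝ) 1 := ⟨hp0.trans_le hpq, hq1⟩
  rw [dOf_eq F hp', dOf_eq F hq']
  apply hF.1
  rwa [cauchyQ_le_iff hp', F0_cauchyQ hq']

lemma dOf_rightCts {F : ℝ → ℝ} (hF : F ∈ m0Set) : DFRightCts (dOf F) := by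
  intro p hp
  rcases hp.1.eq_or_lt with rfl | hp0
  · rw [ContinuousWithinAt, dOf_zero]
    exact dOf_tendsto_zero hF
  have hp' : p ∈ Ioo (0 : ℝ) 1 := ⟨hp0, hp.2⟩
  -- Right of `p`, the quantile stays in `Ici (cauchyQ p)`, where `F` is right-continuous.
  have hQ : Tendsto cauchyQ (𝓝[>] p) (𝓝[≥] (cauchyQ p)) := by
    refine tendsto_nhdsWithin_iff.2 ⟨(cauchyQ_continuousAt hp').continuousWithinAt, ?_⟩
    filter_upwards [Ioo_mem_nhdsGT hp.2] with q hq
    rw [mem_Ici, le_cauchyQ_iff ⟨hp0.trans hq.1, hq.2⟩, F0_cauchyQ hp']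
    exact hq.1.le
  rw [ContinuousWithinAt, dOf_eq F hp']
  refine (Tendsto.comp (hF.2.1 (cauchyQ p)) hQ).congr' ?_
  filter_upwards [Ioo_mem_nhdsGT hp.2] with q hq
  exact (dOf_eq F ⟨hp0.trans hq.1, hq.2⟩).symm

lemma distortT_dOf {F : ℝ → ℝ} (hF : F ∈ m0Set) (x : ℝ) : distortT (dOf F) F0 x = F x := by
  rw [distortT_F0 (dOf_rightCts hF), dOf_eq F (F0_mem x), cauchyQ_F0]

lemma comp_F0_mem {d : ℝ → ℝ} (hd : IsDFhat d) (hr : DFRightCts d) : d ∘ F0 ∈ m0Set := by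
  refine ⟨fun x y h => ?_, fun x => ?_, hd.2.1.comp F0_tendsto_atBot,
    hd.2.2.comp F0_tendsto_atTop⟩
  · exact hd.1.1 (Ioo_subset_Icc_self (F0_mem x)) (Ioo_subset_Icc_self (F0_mem y))
      (F0_strictMono.monotone h)
  · exact continuousWithinAt_Ioi_iff_Ici.1 (comp_F0_tendsto hr x)

/-- For every cdf `F` on ℝ, the explicit `d = dOf F` is a right-continuous
distortion function with `d(0+) = 0`, `d(1-) = 1`, and `T_d F₀ = F`.
Consequently `M₀ = {T_d F₀ : d right-continuous, d ∈ F̂_D}`. -/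
theorem stmt17 :
    (∀ F ∈ m0Set,
      (IsDFhat (dOf F) ∧ DFRightCts (dOf F)) ∧
        ∀ x, distortT (dOf F) F0 x = F x) ∧
    m0Set = {G : ℝ → ℝ | ∃ d : ℝ → ℝ, IsDFhat d ∧ DFRightCts d ∧
      ∀ x, G x = distortT d F0 x} := by
  have key : ∀ F ∈ m0Set, (IsDFhat (dOf F) ∧ DFRightCts (dOf F)) ∧
      ∀ x, distortT (dOf F) F0 x = F x := fun F hF =>
    ⟨⟨⟨⟨dOf_monotoneOn hF, dOf_zero F, dOf_one F⟩, dOf_tendsto_zero hF, dOf_tendsto_one hF⟩,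
      dOf_rightCts hF⟩, distortT_dOf hF⟩
  refine ⟨key, Set.ext fun G => ⟨fun hG => ?_, ?_⟩⟩
  · obtain ⟨⟨h1, h2⟩, h3⟩ := key G hG
    exact ⟨dOf G, h1, h2, fun x => (h3 x).symm⟩
  · rintro ⟨d, hd, hr, hG⟩
    have : G = d ∘ F0 := funext fun x => (hG x).trans (distortT_F0 hr x)
    rw [this]
    exact comp_F0_mem hd hr
end
end

section
/- Let d : [0,1] → [0,1] be given by d(x) = 1 for x ∈ (1/2, 1] and d(x) = 0 for x ∈ [0, 1/2]. Then d is a distortion function, and the associated probability distortion satisfies T_d(F) = δ_{F_R^{-1}(1/2)} (the point mass at the right quantile of F at level 1/2) for every F ∈ M; consequently T_d is monotone and commutes with T^u for every increasing continuous u : ℝ → ℝ, but T_d is not lower-semicontinuous: there exist F_n, F ∈ M with F_n → F weakly and G ∈ M such that T_d(F_n) ≤_st G for all n while T_d(F) ≤_st G fails (e.g., F_n = Bernoulli(1/2 − 1/n), F = Bernoulli(1/2), G = Uniform[0,1]). -/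
/-! The right limit of the monotone `0/1`-valued function `d18 ∘ F` at `x` is `1` exactly when
`1/2 < F y` for every `y > x` (`distortT_d18`), and this says `rightQ F (1/2) ≤ x`
(`rightQ_le_iff`); so `T_{d18} F` is the point mass at `q = rightQ F (1/2)`, and monotonicity is
immediate.

For the commutation with `T^u`, both sides are indicators of `{x | u q ≤ x}`. If `u q < y`, then by
continuity `u z < y` for some `z > q`, so the cdf of `u(X)` at `y` is at least `F z > 1/2`; if
`y < u q`, then `y < u z` for some `z < q`, so that cdf at `y` is at most `F z ≤ 1/2`. This
identifies the left side, and the same comparison applied to the cdf of `δ_q` identifies the right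
side.

Lower semicontinuity fails for the two-point laws on `{0, 1}` with mass `1/2 + 1/(n+2)` at `0`: they
are all sent to `δ_0`, whereas their weak limit, with mass exactly `1/2` at `0`, is sent to `δ_1`. -/

open MeasureTheory Filter Topology Set

noncomputable section

/-- The distortion function `d = 𝟙_{(1/2, 1]}`. -/
noncomputable def d18 : ℝ → ℝ := fun x => if 1 / 2 < x then 1 else 0

/-- The cdf of the point mass at `q`. -/
def pointCdf (q : ℝ) : ℝ → ℝ := fun x => if q ≤ x then 1 else 0

/-- The cdf of the law with mass `p` at `0` and `1 - p` at `1`, i.e. Bernoulli(`1 - p`). -/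
def twoPointCdf (p : ℝ) : ℝ → ℝ := fun x => p * pointCdf 0 x + (1 - p) * pointCdf 1 x

lemma pointCdf_mem (q : ℝ) : pointCdf q ∈ mSet := by
  refine ⟨?_, ?_, ⟨q - 1, ?_⟩, ⟨q, ?_⟩⟩
  · intro x y hxy
    unfold pointCdf
    split_ifs <;> linarith
  · intro x
    by_cases h : q ≤ x
    · refine (continuousWithinAt_const (b := (1 : ℝ))).congr ?_ ?_
      · intro y hy
        exact if_pos (h.trans hy)
      · exact if_pos h
    · have hev : pointCdf q =ᶠ[𝓝[Ici x] x] fun _ => 0 := by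
        refine nhdsWithin_le_nhds ?_
        filter_upwards [Iio_mem_nhds (not_le.mp h)] with y hy
        exact if_neg (not_le.mpr hy)
      exact continuousWithinAt_const.congr_of_eventuallyEq hev (if_neg h)
  · intro x hx
    exact if_neg (by linarith)
  · intro x hx
    exact if_pos hx

lemma twoPointCdf_mem {p : ℝ} (h0 : 0 ≤ p) (h1 : p ≤ 1) : twoPointCdf p ∈ mSet := by
  obtain ⟨m0, c0, -, -⟩ := pointCdf_mem 0
  obtain ⟨m1, c1, -, -⟩ := pointCdf_mem 1
  refine ⟨?_, ?_, ⟨-1, ?_⟩, ⟨1, ?_⟩⟩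
  · intro x y hxy
    exact add_le_add (mul_le_mul_of_nonneg_left (m0 hxy) h0)
      (mul_le_mul_of_nonneg_left (m1 hxy) (by linarith))
  · intro x
    exact (continuousWithinAt_const.mul (c0 x)).add (continuousWithinAt_const.mul (c1 x))
  · intro x hx
    simp [twoPointCdf, pointCdf, show ¬ (0 ≤ x) by linarith, show ¬ (1 ≤ x) by linarith]
  · intro x hx
    simp [twoPointCdf, pointCdf, show 0 ≤ x by linarith, hx]

lemma d18_monotone : Monotone d18 := by
  intro x y hxy
  unfold d18
  split_ifs <;> linarith

open Classical in
/-- Only monotonicity of `F` is needed, so this also applies to `utilityT u F` without knowing that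
it is a cdf. -/
lemma distortT_d18 {F : ℝ → ℝ} (hF : Monotone F) (x : ℝ) :
    distortT d18 F x = if ∀ y, x < y → 1 / 2 < F y then 1 else 0 := by
  refine rightLim_eq_of_tendsto ?_
  split_ifs with h
  · refine tendsto_const_nhds.congr' ?_
    filter_upwards [self_mem_nhdsWithin] with y hy
    exact (if_pos (h y hy)).symm
  · push Not at h
    obtain ⟨z, hxz, hz⟩ := h
    refine tendsto_const_nhds.congr' ?_
    filter_upwards [Ioo_mem_nhdsGT hxz] with y hy
    exact (if_neg (not_lt.mpr ((hF hy.2.le).trans hz))).symm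

lemma rightQ_le_iff {F : ℝ → ℝ} (hF : F ∈ mSet) (x : ℝ) :
    rightQ F (1 / 2) ≤ x ↔ ∀ y, x < y → 1 / 2 < F y := by
  obtain ⟨hm, -, ⟨a, ha⟩, ⟨b, hb⟩⟩ := hF
  have hne : {x | 1 / 2 < F x}.Nonempty := ⟨b, by
    change 1 / 2 < F b
    rw [hb b le_rfl]
    norm_num⟩
  have hbdd : BddBelow {x | 1 / 2 < F x} := by
    refine ⟨a, fun y hy => ?_⟩
    by_contra hya
    have h0 := ha y (not_le.mp hya).le
    have hy' : 1 / 2 < F y := hy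
    linarith
  constructor
  · intro h y hxy
    obtain ⟨z, hz, hzy⟩ := exists_lt_of_csInf_lt hne (h.trans_lt hxy)
    exact lt_of_lt_of_le hz (hm hzy.le)
  · intro h
    exact le_of_forall_gt_imp_ge_of_dense fun y hxy => csInf_le hbdd (h y hxy)

lemma distortT_eq_pointCdf {F : ℝ → ℝ} (hF : F ∈ mSet) :
    distortT d18 F = pointCdf (rightQ F (1 / 2)) := by
  classical
  funext x
  rw [distortT_d18 hF.1, pointCdf]
  simp only [rightQ_le_iff hF]

/-- `T^u F` as a measure of the sublevel sets of `u`, for a probability measure `μ` with cdf `F`. -/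
lemma exists_measure {F : ℝ → ℝ} (hF : F ∈ mSet) :
    ∃ μ : Measure ℝ, IsProbabilityMeasure μ ∧ (∀ z, μ.real (Iic z) = F z) ∧
      ∀ u, Measurable u → ∀ y, utilityT u F y = μ.real (u ⁻¹' Iic y) := by
  obtain ⟨hm, hc, ⟨a, ha⟩, ⟨b, hb⟩⟩ := hF
  have hbot : Tendsto F atBot (𝓝 0) := by
    refine tendsto_const_nhds.congr' ?_
    filter_upwards [eventually_le_atBot a] with x hx
    exact (ha x hx).symm
  have htop : Tendsto F atTop (𝓝 1) := by
    refine tendsto_const_nhds.congr' ?_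
    filter_upwards [eventually_ge_atTop b] with x hx
    exact (hb x hx).symm
  refine ⟨StieltjesFunction.measure ⟨F, hm, hc⟩,
    StieltjesFunction.isProbabilityMeasure _ hbot htop, ?_, ?_⟩
  · intro z
    rw [Measure.real, StieltjesFunction.measure_Iic _ hbot z, sub_zero]
    exact ENNReal.toReal_ofReal (hm.le_of_tendsto hbot z)
  · intro u hu y
    rw [utilityT, dif_pos ⟨hm, hc⟩, Measure.map_apply hu measurableSet_Iic]
    rfl

lemma utilityT_monotone {u F : ℝ → ℝ} (hu : Measurable u) (hF : F ∈ mSet) :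
    Monotone (utilityT u F) := by
  obtain ⟨μ, _, -, hμ⟩ := exists_measure hF
  intro x y hxy
  rw [hμ u hu, hμ u hu]
  exact measureReal_mono (preimage_mono (Iic_subset_Iic.mpr hxy))

lemma utilityT_le_one {u F : ℝ → ℝ} (hu : Measurable u) (hF : F ∈ mSet) (y : ℝ) :
    utilityT u F y ≤ 1 := by
  obtain ⟨μ, _, -, hμ⟩ := exists_measure hF
  rw [hμ u hu]
  exact measureReal_le_one

lemma utilityT_nonneg {u F : ℝ → ℝ} (hu : Measurable u) (hF : F ∈ mSet) (y : ℝ) :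
    0 ≤ utilityT u F y := by
  obtain ⟨μ, _, -, hμ⟩ := exists_measure hF
  rw [hμ u hu]
  exact measureReal_nonneg

lemma le_utilityT {u F : ℝ → ℝ} (hu : Monotone u) (hF : F ∈ mSet) {y z : ℝ} (h : u z ≤ y) :
    F z ≤ utilityT u F y := by
  obtain ⟨μ, _, hIic, hμ⟩ := exists_measure hF
  rw [hμ u hu.measurable, ← hIic]
  exact measureReal_mono fun w hw => (hu hw).trans h

lemma utilityT_le {u F : ℝ → ℝ} (hu : Monotone u) (hF : F ∈ mSet) {y z : ℝ} (h : y < u z) :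
    utilityT u F y ≤ F z := by
  obtain ⟨μ, _, hIic, hμ⟩ := exists_measure hF
  rw [hμ u hu.measurable, ← hIic]
  refine measureReal_mono fun w hw => ?_
  by_contra hzw
  exact absurd (hu (not_le.mp hzw).le) (not_le.mpr (lt_of_le_of_lt hw h))

lemma exists_gt_lt_of_continuous {u : ℝ → ℝ} (hu : Continuous u) {q y : ℝ} (h : u q < y) :
    ∃ z, q < z ∧ u z < y := by
  have hev : ∀ᶠ z in 𝓝[>] q, u z < y :=
    nhdsWithin_le_nhds (hu.continuousAt.eventually_lt_const h)
  exact (eventually_mem_nhdsWithin.and hev).exists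

lemma exists_lt_gt_of_continuous {u : ℝ → ℝ} (hu : Continuous u) {q y : ℝ} (h : y < u q) :
    ∃ z, z < q ∧ y < u z := by
  have hev : ∀ᶠ z in 𝓝[<] q, y < u z :=
    nhdsWithin_le_nhds (hu.continuousAt.eventually_const_lt h)
  exact (eventually_mem_nhdsWithin.and hev).exists

lemma utilityT_pointCdf {u : ℝ → ℝ} (hu : IsUF u) (q : ℝ) :
    utilityT u (pointCdf q) = pointCdf (u q) := by
  funext x
  have hq := pointCdf_mem q
  by_cases h : u q ≤ x
  · have h1 := le_utilityT hu.1 hq h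
    rw [pointCdf, if_pos le_rfl] at h1
    rw [pointCdf, if_pos h]
    exact le_antisymm (utilityT_le_one hu.1.measurable hq x) h1
  · obtain ⟨z, hzq, hz⟩ := exists_lt_gt_of_continuous hu.2 (not_le.mp h)
    have h0 := utilityT_le hu.1 hq hz
    rw [pointCdf, if_neg (not_le.mpr hzq)] at h0
    rw [pointCdf, if_neg h]
    exact le_antisymm h0 (utilityT_nonneg hu.1.measurable hq x)

lemma distortT_utilityT {u F : ℝ → ℝ} (hu : IsUF u) (hF : F ∈ mSet) :
    distortT d18 (utilityT u F) = pointCdf (u (rightQ F (1 / 2))) := by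
  classical
  funext x
  rw [distortT_d18 (utilityT_monotone hu.1.measurable hF), pointCdf]
  have hiff : (∀ y, x < y → 1 / 2 < utilityT u F y) ↔ u (rightQ F (1 / 2)) ≤ x := by
    constructor
    · intro h
      by_contra hx
      obtain ⟨y, hxy, hy⟩ := exists_between (not_le.mp hx)
      obtain ⟨z, hzq, hz⟩ := exists_lt_gt_of_continuous hu.2 hy
      refine absurd hzq (not_lt.mpr ((rightQ_le_iff hF z).mpr fun w hw => ?_))
      exact (h y hxy).trans_le ((utilityT_le hu.1 hF hz).trans (hF.1 hw.le))
    · intro h y hxy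
      obtain ⟨z, hqz, hz⟩ := exists_gt_lt_of_continuous hu.2 (h.trans_lt hxy)
      exact ((rightQ_le_iff hF _).mp le_rfl z hqz).trans_le (le_utilityT hu.1 hF hz.le)
  simp only [hiff]

/-- `d18` is a distortion function, `T_{d18} F` is the point mass at the right
quantile `F_R^{-1}(1/2)` for every `F ∈ M`, `T_{d18}` is monotone and commutes
with `T^u` for every increasing continuous `u`, but `T_{d18}` is not
lower-semicontinuous: there are `F_n → F` weakly in `M` and `G ∈ M` with
`T_{d18} F_n ≤_st G` for all `n` while `T_{d18} F ≤_st G` fails. -/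
theorem stmt18 :
    IsDF d18 ∧
    (∀ F ∈ mSet, ∀ x, distortT d18 F x = if rightQ F (1 / 2) ≤ x then (1:ℝ) else 0) ∧
    (∀ F ∈ mSet, ∀ G ∈ mSet, (∀ x, G x ≤ F x) →
      ∀ x, distortT d18 G x ≤ distortT d18 F x) ∧
    (∀ u : ℝ → ℝ, IsUF u → ∀ F ∈ mSet,
      distortT d18 (utilityT u F) = utilityT u (distortT d18 F)) ∧
    (∃ Fn : ℕ → ℝ → ℝ, ∃ F G : ℝ → ℝ,
      (∀ n, Fn n ∈ mSet) ∧ F ∈ mSet ∧ G ∈ mSet ∧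
      (∀ x, ContinuousAt F x → Tendsto (fun n => Fn n x) atTop (𝓝 (F x))) ∧
      (∀ n, ∀ x, G x ≤ distortT d18 (Fn n) x) ∧
      ¬ (∀ x, G x ≤ distortT d18 F x)) := by
  classical
  refine ⟨⟨d18_monotone.monotoneOn _, by norm_num [d18], by norm_num [d18]⟩, ?_, ?_, ?_, ?_⟩
  · intro F hF x
    rw [distortT_eq_pointCdf hF, pointCdf]
  · intro F hF G hG h x
    exact le_of_tendsto_of_tendsto' ((d18_monotone.comp hG.1).tendsto_rightLim x)
      ((d18_monotone.comp hF.1).tendsto_rightLim x) fun y => d18_monotone (h y)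
  · intro u hu F hF
    rw [distortT_utilityT hu hF, distortT_eq_pointCdf hF, utilityT_pointCdf hu]
  · have hmem : ∀ n : ℕ, twoPointCdf (1 / 2 + 1 / ((n : ℝ) + 2)) ∈ mSet := by
      intro n
      have hn : (2 : ℝ) ≤ (n : ℝ) + 2 := by linarith [Nat.cast_nonneg (α := ℝ) n]
      have h2 : 1 / ((n : ℝ) + 2) ≤ 1 / 2 := one_div_le_one_div_of_le two_pos hn
      exact twoPointCdf_mem (by positivity) (by linarith)
    have hhalf : twoPointCdf (1 / 2) ∈ mSet := twoPointCdf_mem (by norm_num) (by norm_num)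
    refine ⟨fun n => twoPointCdf (1 / 2 + 1 / ((n : ℝ) + 2)), twoPointCdf (1 / 2), pointCdf 0,
      hmem, hhalf, pointCdf_mem 0, ?_, ?_, ?_⟩
    · intro x _
      have hp : Tendsto (fun n : ℕ => 1 / 2 + 1 / ((n : ℝ) + 2)) atTop (𝓝 (1 / 2)) := by
        have h := (tendsto_const_nhds (x := (1 : ℝ))).div_atTop
          (tendsto_atTop_add_const_right atTop (2 : ℝ) (tendsto_natCast_atTop_atTop (R := ℝ)))
        simpa using h.const_add (1 / 2 : ℝ)
      exact (hp.mul_const _).add ((hp.const_sub 1).mul_const _)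
    · intro n x
      rw [distortT_d18 (hmem n).1]
      by_cases hx : 0 ≤ x
      · rw [if_pos]
        · unfold pointCdf
          split_ifs <;> norm_num
        · intro y hxy
          have hpos : 0 < 1 / ((n : ℝ) + 2) := by positivity
          unfold twoPointCdf pointCdf
          rw [if_pos (hx.trans hxy.le)]
          split_ifs <;> linarith
      · rw [pointCdf, if_neg hx]
        split_ifs <;> norm_num
    · intro h
      -- Compare at `0`: the limit law gives mass `1/2`, not more, to `(-∞, y]` for `0 < y < 1`.
      have h0 := h 0
      rw [distortT_d18 hhalf.1, if_neg, pointCdf, if_pos le_rfl] at h0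
      · norm_num at h0
      · intro hy
        have := hy (1 / 2) (by norm_num)
        norm_num [twoPointCdf, pointCdf] at this
end
end
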